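/- Let (A,Λ) be an associative form ring with 1, n ≥ 3, and let (I,Γ), (J,Δ) be form ideals of (A,Λ). Suppose a ∈ I, b ∈ J, r ∈ A and i ≠ ±j. Then [T_ji(a), Z_ji(b,r)] ∈ [FU(2n,I,Γ), FU(2n,J,Δ)], where Z_ji(b,r) = T_ij(r)·T_ji(b)·T_ij(−r). -/

import Mathlib

open Matrix
open scoped commutatorElement

/-- Bak's form ring data on a ring `A`: an involution `bar`, a central symmetry
`λ` with `λ λ̄ = 1`, and a form parameter `Λ`. -/
structure FormRingData (A : Type*) [Ring A] where
  bar : A →+ A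
  bar_mul : ∀ a b : A, bar (a * b) = bar b * bar a
  bar_bar : ∀ a : A, bar (bar a) = a
  lam : A
  lam_comm : ∀ a : A, lam * a = a * lam
  lam_bar : lam * bar lam = 1
  Lambda : AddSubgroup A
  lambdaMin_mem : ∀ c : A, c - lam * bar c ∈ Lambda
  lambdaMax_mem : ∀ x ∈ Lambda, x = -(lam * bar x)
  lambda_conj : ∀ (c : A), ∀ x ∈ Lambda, c * x * bar c ∈ Lambda

namespace FormRingData

variable {A : Type*} [Ring A]

/-- Integral powers of the symmetry `λ`; negative powers use `λ̄ = λ⁻¹`. -/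
def lpow (D : FormRingData A) (k : ℤ) : A :=
  if 0 ≤ k then D.lam ^ k.toNat else (D.bar D.lam) ^ (-k).toNat

end FormRingData

/-- The index set `Ω = {1,…,n,−n,…,−1}`, coded as `Fin n × Bool`
(second component `true` = positive index). -/
abbrev Idx (n : ℕ) := Fin n × Bool

namespace Idx

/-- The involution `i ↦ −i` on indices. -/
def neg {n : ℕ} (i : Idx n) : Idx n := (i.1, !i.2)

/-- The sign `ε(i) ∈ {±1}`. -/
def eps {n : ℕ} (i : Idx n) : ℤ := if i.2 then 1 else -1

theorem neg_ne {n : ℕ} (i : Idx n) : neg i ≠ i := by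
  simp [neg, Prod.ext_iff]

theorem neg_injective {n : ℕ} : Function.Injective (neg (n := n)) := by
  intro i j h
  simp only [neg, Prod.mk.injEq] at h
  refine Prod.ext h.1 ?_
  have h2 := h.2
  cases hi : i.2 <;> cases hj : j.2 <;> simp_all

theorem neg_neg {n : ℕ} (i : Idx n) : neg (neg i) = i := by
  simp [neg]

end Idx

/-- `GL(2n, A)`, realised as the units of the `Ω × Ω` matrix ring over `A`. -/
abbrev GLn (A : Type*) [Ring A] (n : ℕ) := (Matrix (Idx n) (Idx n) A)ˣ

section aux

theorem one_add_mul_one_sub {R : Type*} [Ring R] {X : R} (h : X * X = 0) :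
    (1 + X) * (1 - X) = 1 := by
  have hh : (1 + X) * (1 - X) = 1 - X * X := by noncomm_ring
  rw [hh, h, sub_zero]

theorem one_sub_mul_one_add {R : Type*} [Ring R] {X : R} (h : X * X = 0) :
    (1 - X) * (1 + X) = 1 := by
  have hh : (1 - X) * (1 + X) = 1 - X * X := by noncomm_ring
  rw [hh, h, sub_zero]

theorem stdBasisMatrix_neg' {A : Type*} [Ring A] {n : ℕ} (i j : Idx n) (c : A) :
    single i j (-c) = -single i j c := by
  refine eq_neg_of_add_eq_zero_left ?_
  rw [← Matrix.single_add]
  simp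

end aux

namespace FormRingData

variable {A : Type*} [Ring A] {n : ℕ}

/-- The off-diagonal part of a short root element. -/
def Xmat (D : FormRingData A) (i j : Idx n) (c : A) : Matrix (Idx n) (Idx n) A :=
  single i j c -
    single (Idx.neg j) (Idx.neg i) (D.lpow ((Idx.eps j - Idx.eps i) / 2) * D.bar c)

theorem Xmat_mul (D : FormRingData A) {i j : Idx n} (hij : i ≠ j) (c c' : A) :
    D.Xmat i j c * D.Xmat i j c' = 0 := by
  unfold Xmat
  rw [sub_mul, mul_sub, mul_sub,
    Matrix.single_mul_single_of_ne _ _ _ _ (Ne.symm hij),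
    Matrix.single_mul_single_of_ne _ _ _ _ (Ne.symm (Idx.neg_ne j)),
    Matrix.single_mul_single_of_ne _ _ _ _ (Idx.neg_ne i),
    Matrix.single_mul_single_of_ne _ _ _ _ (fun h => hij (Idx.neg_injective h))]
  simp

theorem Xmat_neg (D : FormRingData A) (i j : Idx n) (c : A) :
    D.Xmat i j (-c) = -D.Xmat i j c := by
  unfold Xmat
  rw [map_neg, mul_neg, stdBasisMatrix_neg', stdBasisMatrix_neg']
  abel

/-- The elementary short root unipotent `T_{ij}(c)`, for `i ≠ ±j`
(with junk value `1` when `i = j`). -/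
def TS (D : FormRingData A) (i j : Idx n) (c : A) : GLn A n :=
  if h : i = j then 1 else
    { val := 1 + D.Xmat i j c
      inv := 1 + D.Xmat i j (-c)
      val_inv := by
        rw [D.Xmat_neg, ← sub_eq_add_neg]
        exact one_add_mul_one_sub (D.Xmat_mul h c c)
      inv_val := by
        rw [D.Xmat_neg, ← sub_eq_add_neg]
        exact one_sub_mul_one_add (D.Xmat_mul h c c) }

/-- The elementary long root unipotent `T_{i,−i}(c)`. -/
def TL (D : FormRingData A) (i : Idx n) (c : A) : GLn A n where
  val := 1 + single i (Idx.neg i) c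
  inv := 1 + single i (Idx.neg i) (-c)
  val_inv := by
    rw [stdBasisMatrix_neg', ← sub_eq_add_neg]
    exact one_add_mul_one_sub (Matrix.single_mul_single_of_ne _ _ _ _ (Idx.neg_ne i) _)
  inv_val := by
    rw [stdBasisMatrix_neg', ← sub_eq_add_neg]
    exact one_sub_mul_one_add (Matrix.single_mul_single_of_ne _ _ _ _ (Idx.neg_ne i) _)

/-- The elementary unitary transvection `T_{ij}(c)` (long or short root type
according to whether `j = −i`). -/
def T (D : FormRingData A) (i j : Idx n) (c : A) : GLn A n :=
  if j = Idx.neg i then D.TL i c else D.TS i j c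

/-- The elementary commutator `Y_{ij}(a,b) = [T_{ij}(a), T_{ji}(b)]`. -/
def Y (D : FormRingData A) (i j : Idx n) (a b : A) : GLn A n :=
  ⁅D.T i j a, D.T j i b⁆

/-- The elementary conjugate `Z_{ij}(a,c) = T_{ji}(c) T_{ij}(a) T_{ji}(−c)`. -/
def Z (D : FormRingData A) (i j : Idx n) (a c : A) : GLn A n :=
  D.T j i c * D.T i j a * D.T j i (-c)

/-- The set of elementary unitary transvections of level `(I,Γ)`. -/
def transvGen (D : FormRingData A) (n : ℕ) (I Γ : AddSubgroup A) : Set (GLn A n) :=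
  {x | ∃ i j : Idx n, i ≠ j ∧ i ≠ Idx.neg j ∧ ∃ c ∈ I, x = D.TS i j c} ∪
    {x | ∃ i : Idx n, ∃ g ∈ Γ, x = D.TL i (D.lpow (-(Idx.eps i + 1) / 2) * g)}

/-- The unrelative elementary subgroup `FU(2n, I, Γ)`. -/
def FU (D : FormRingData A) (n : ℕ) (I Γ : AddSubgroup A) : Subgroup (GLn A n) :=
  Subgroup.closure (D.transvGen n I Γ)

/-- The absolute elementary unitary group `EU(2n, A, Λ)`. -/
def EUmax (D : FormRingData A) (n : ℕ) : Subgroup (GLn A n) :=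
  D.FU n ⊤ D.Lambda

/-- The relative elementary subgroup `EU(2n, I, Γ)`: the normal closure of
`FU(2n, I, Γ)` in `EU(2n, A, Λ)`. -/
def EU (D : FormRingData A) (n : ℕ) (I Γ : AddSubgroup A) : Subgroup (GLn A n) :=
  Subgroup.closure {x | ∃ g ∈ D.EUmax n, ∃ t ∈ D.transvGen n I Γ, x = g * t * g⁻¹}

/-- The additive subgroup generated by products `st`, `s ∈ S`, `t ∈ T`. -/
def mulSub (S T : AddSubgroup A) : AddSubgroup A :=
  AddSubgroup.closure {x | ∃ a ∈ S, ∃ b ∈ T, x = a * b}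

/-- The symmetrised product `ST + TS` of two (additive subgroups underlying)
two-sided ideals. -/
def symI (S T : AddSubgroup A) : AddSubgroup A :=
  mulSub S T ⊔ mulSub T S

/-- The minimal relative form parameter `Γ_min(K)` of level `K`. -/
def gammaMin (D : FormRingData A) (K : AddSubgroup A) : AddSubgroup A :=
  AddSubgroup.closure
    ({x | ∃ a ∈ K, x = a - D.lam * D.bar a} ∪
      {x | ∃ a ∈ K, ∃ c ∈ D.Lambda, x = a * c * D.bar a})

/-- The relative form parameter `ˢΓ = ⟨ b γ b̄ ∣ b ∈ S, γ ∈ Γ ⟩`. -/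
def conjPar (D : FormRingData A) (S Γ : AddSubgroup A) : AddSubgroup A :=
  AddSubgroup.closure {x | ∃ b ∈ S, ∃ g ∈ Γ, x = b * g * D.bar b}

/-- The relative form parameter of the symmetrised product
`(I,Γ)∘(J,Δ) = (IJ+JI, Γ_min(IJ+JI) + ᴶΓ + ᴵΔ)`. -/
def symG (D : FormRingData A) (I Γ J Δ : AddSubgroup A) : AddSubgroup A :=
  D.gammaMin (symI I J) ⊔ D.conjPar J Γ ⊔ D.conjPar I Δ

/-- The elementary subgroup `EU(2n, (I,Γ)∘(J,Δ))` of the symmetrised product. -/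
def EUsym (D : FormRingData A) (n : ℕ) (I Γ J Δ : AddSubgroup A) : Subgroup (GLn A n) :=
  D.EU n (symI I J) (D.symG I Γ J Δ)

/-- Position-dependent membership `a ∈ (I,Γ)` at position `(i,j)`:
`a ∈ I` for a short root position, `a ∈ λ^{−(ε(i)+1)/2}Γ` for a long one. -/
def pmem (D : FormRingData A) (I Γ : AddSubgroup A) {n : ℕ} (i j : Idx n) (a : A) : Prop :=
  if j = Idx.neg i then ∃ g ∈ Γ, a = D.lpow (-(Idx.eps i + 1) / 2) * g else a ∈ I

end FormRingData

/-- A form ideal `(I,Γ)` of the form ring `(A,Λ)`. -/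
structure FormIdeal {A : Type*} [Ring A] (D : FormRingData A) where
  I : AddSubgroup A
  Gamma : AddSubgroup A
  mul_mem_left : ∀ (c : A), ∀ x ∈ I, c * x ∈ I
  mul_mem_right : ∀ (c : A), ∀ x ∈ I, x * c ∈ I
  bar_mem : ∀ x ∈ I, D.bar x ∈ I
  gammaMin_le : D.gammaMin I ≤ Gamma
  gamma_le_I : Gamma ≤ I
  gamma_le_Lambda : Gamma ≤ D.Lambda
  gamma_conj : ∀ (c : A), ∀ x ∈ Gamma, c * x * D.bar c ∈ Gamma


structure Stein {A G : Type*} [Ring A] [Group G] (t : Fin 3 → Fin 3 → A → G) : Prop where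
  add : ∀ p q, p ≠ q → ∀ a b, t p q (a + b) = t p q a * t p q b
  row : ∀ p q m, p ≠ q → p ≠ m → q ≠ m → ∀ a b, t p q a * t p m b = t p m b * t p q a
  col : ∀ p q m, p ≠ q → p ≠ m → q ≠ m → ∀ a b, t q p a * t m p b = t m p b * t q p a
  com : ∀ p q m, p ≠ q → p ≠ m → q ≠ m → ∀ a b,
    t p q a * t q m b = t p m (a * b) * t q m b * t p q a

namespace Stein

variable {A G : Type*} [Ring A] [Group G] {t : Fin 3 → Fin 3 → A → G}

theorem zero (h : Stein t) {p q : Fin 3} (hpq : p ≠ q) : t p q 0 = 1 := by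
  have := h.add p q hpq 0 0
  simpa using this

theorem neg (h : Stein t) {p q : Fin 3} (hpq : p ≠ q) (a : A) : t p q (-a) = (t p q a)⁻¹ := by
  have := h.add p q hpq (-a) a
  rw [neg_add_cancel, h.zero hpq] at this
  exact eq_inv_of_mul_eq_one_left this.symm

/-- conjugation -/
def cj (t : Fin 3 → Fin 3 → A → G) (p q : Fin 3) (a : A) : G →* G :=
  (MulAut.conj (t p q a)).toMonoidHom

theorem cj_apply (p q : Fin 3) (a : A) (x : G) : cj t p q a x = t p q a * x * (t p q a)⁻¹ := rfl

theorem cj_row (h : Stein t) {p q m : Fin 3} (h1 : p ≠ q) (h2 : p ≠ m) (h3 : q ≠ m) (a b : A) :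
    cj t p q a (t p m b) = t p m b := by
  rw [cj_apply, h.row p q m h1 h2 h3]; group

theorem cj_col (h : Stein t) {p q m : Fin 3} (h1 : p ≠ q) (h2 : p ≠ m) (h3 : q ≠ m) (a b : A) :
    cj t q p a (t m p b) = t m p b := by
  rw [cj_apply, h.col p q m h1 h2 h3]; group

theorem cj_self (h : Stein t) {p q : Fin 3} (h1 : p ≠ q) (a b : A) :
    cj t p q a (t p q b) = t p q b := by
  rw [cj_apply, ← h.add p q h1, add_comm, h.add p q h1]; group

theorem cj_l (h : Stein t) {p q m : Fin 3} (h1 : p ≠ q) (h2 : p ≠ m) (h3 : q ≠ m) (a b : A) :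
    cj t p q a (t q m b) = t p m (a * b) * t q m b := by
  rw [cj_apply, h.com p q m h1 h2 h3]; group

theorem cj_r (h : Stein t) {p q m : Fin 3} (h1 : p ≠ q) (h2 : p ≠ m) (h3 : q ≠ m) (a b : A) :
    cj t q m b (t p q a) = t p m (-(a * b)) * t p q a := by
  rw [cj_apply, h.neg h2, mul_inv_eq_iff_eq_mul, mul_assoc, h.com p q m h1 h2 h3]
  group

/-- The candidate normal subgroup. -/
def M (t : Fin 3 → Fin 3 → A → G) (K : AddSubgroup A) : Subgroup G :=
  Subgroup.closure {x | ∃ p q, p ≠ q ∧ ∃ c ∈ K, ∃ r, x = cj t q p r (t p q c)}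

variable {K : AddSubgroup A}

theorem z_mem {p q : Fin 3} (hpq : p ≠ q) {c : A} (hc : c ∈ K) (r : A) :
    cj t q p r (t p q c) ∈ M t K :=
  Subgroup.subset_closure ⟨p, q, hpq, c, hc, r, rfl⟩

theorem t_mem (h : Stein t) {p q : Fin 3} (hpq : p ≠ q) {c : A} (hc : c ∈ K) :
    t p q c ∈ M t K := by
  have := z_mem (t := t) hpq hc 0
  rwa [cj_apply, h.zero hpq.symm, one_mul, inv_one, mul_one] at this

theorem third : ∀ p q : Fin 3, p ≠ q → ∃ m, p ≠ m ∧ q ≠ m ∧ ∀ k l : Fin 3, k ≠ l →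
    (k = p ∧ l = q) ∨ (k = q ∧ l = p) ∨ (k = p ∧ l = m) ∨ (k = m ∧ l = p) ∨
    (k = q ∧ l = m) ∨ (k = m ∧ l = q) := by decide

theorem cjK (h : Stein t) (hl : ∀ x, ∀ c ∈ K, x * c ∈ K) (hr : ∀ x, ∀ c ∈ K, c * x ∈ K)
    {p q k l : Fin 3} (hpq : p ≠ q) (hkl : k ≠ l) {c : A} (hc : c ∈ K) (s : A) :
    cj t k l s (t p q c) ∈ M t K := by
  obtain ⟨m, hpm, hqm, hc'⟩ := third p q hpq
  rcases hc' k l hkl with ⟨rfl, rfl⟩ | ⟨rfl, rfl⟩ | ⟨rfl, rfl⟩ | ⟨rfl, rfl⟩ | ⟨rfl, rfl⟩ | ⟨rfl, rfl⟩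
  · rw [h.cj_self hpq]; exact h.t_mem hpq hc
  · exact z_mem hpq hc s
  · rw [h.cj_row hpm hpq hqm.symm]; exact h.t_mem hpq hc
  · rw [h.cj_l hpm.symm hqm.symm hpq]
    exact mul_mem (h.t_mem hqm.symm (hl _ _ hc)) (h.t_mem hpq hc)
  · rw [h.cj_r hpq hpm hqm]
    exact mul_mem (h.t_mem hpm (neg_mem (hr _ _ hc))) (h.t_mem hpq hc)
  · rw [h.cj_col hqm hpq.symm hpm.symm]; exact h.t_mem hpq hc

/-- conjugation of `z` through `Y = t q p r` -/
theorem cj_z (h : Stein t) {p q k l : Fin 3} (hqp : q ≠ p) (r s : A) (x : G) :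
    cj t k l s (cj t q p r x) =
      cj t q p r (MulAut.conj (cj t q p (-r) (t k l s)) x) := by
  simp only [cj_apply, MulAut.conj_apply, h.neg hqp]
  group

theorem conj_mul' (a b x : G) : MulAut.conj (a * b) x = MulAut.conj a (MulAut.conj b x) := by
  simp

theorem normM (h : Stein t) (hl : ∀ x, ∀ c ∈ K, x * c ∈ K) (hr : ∀ x, ∀ c ∈ K, c * x ∈ K)
    {p q k l : Fin 3} (hpq : p ≠ q) (hkl : k ≠ l) {c : A} (hc : c ∈ K) (r s : A) :
    cj t k l s (cj t q p r (t p q c)) ∈ M t K := by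
  have C := @cjK _ _ _ _ _ K h hl hr
  have e : ∀ (p q) (a : A) (x : G), MulAut.conj (t p q a) x = cj t p q a x := fun _ _ _ _ => rfl
  obtain ⟨m, hpm, hqm, hc'⟩ := third p q hpq
  rcases hc' k l hkl with ⟨rfl, rfl⟩ | ⟨rfl, rfl⟩ | ⟨rfl, rfl⟩ | ⟨rfl, rfl⟩ | ⟨rfl, rfl⟩ | ⟨rfl, rfl⟩
  · have e1 : t k l c = t k m c * (cj t m l 1 (t k m c))⁻¹ := by
      rw [h.cj_r hpm hpq hqm.symm, h.neg hpq, mul_one]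
      group
    have e2 : ∀ x y : G, t m l 1 * x * (t m l 1)⁻¹ = y → t m l 1 * x = y * t m l 1 := by
      intro x y hxy; rw [← hxy]; group
    have hU : cj t k l s (cj t l k r (t k m c)) =
        t k m (s * (r * c)) * t l m (r * c) * t k m c := by
      rw [h.cj_l hpq.symm hqm hpm, map_mul, h.cj_l hpq hpm hqm, h.cj_row hpq hpm hqm]
    have hV : cj t k l s (cj t l k r (t m l 1)) =
        t m l (-(-r * s)) * t m k (-r) * t m l 1 := by
      rw [h.cj_r hqm.symm hpm.symm hpq.symm, map_mul, h.cj_r hpm.symm hqm.symm hpq,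
        h.cj_col hpq.symm hqm hpm, one_mul]
    set φ : G →* G := (cj t k l s).comp (cj t l k r) with hφ
    have e3 : cj t k l s (cj t l k r (t k l c)) =
        φ (t k m c) * ((φ (t m l 1)) * (φ (t k m c)) * (φ (t m l 1))⁻¹)⁻¹ := by
      conv_lhs => rw [e1]
      change φ _ = _
      rw [map_mul, map_inv, cj_apply, map_mul, map_mul, map_inv]
    have hV' : φ (t m l 1) = t m k (-r) * t m l (-(-r * s) + 1) := by
      change cj t k l s (cj t l k r (t m l 1)) = _
      rw [hV, h.add m l hqm.symm, h.row m l k hqm.symm hpm.symm hpq.symm]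
      group
    have hV'' : φ (t m l 1) = t m l (-(-r * s) + 1) * t m k (-r) := by
      rw [hV', h.row m l k hqm.symm hpm.symm hpq.symm]
    have hU' : φ (t k m c) = t k m (s * (r * c)) * t l m (r * c) * t k m c := hU
    have c1 : s * (r * c) ∈ K := hl _ _ (hl _ _ hc)
    have c2 : r * c ∈ K := hl _ _ hc
    have key1 : ∀ d ∈ K, MulAut.conj (φ (t m l 1)) (t k m d) ∈ M t K := by
      intro d hd
      rw [hV', conj_mul', e, e, h.cj_r hpm hpq hqm.symm, map_mul]
      exact mul_mem (C hpq hpm.symm (neg_mem (hr _ _ hd)) _) (C hpm hpm.symm hd _)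
    have key2 : ∀ d ∈ K, MulAut.conj (φ (t m l 1)) (t l m d) ∈ M t K := by
      intro d hd
      rw [hV'', conj_mul', e, e, h.cj_r hqm hpq.symm hpm.symm, map_mul]
      exact mul_mem (C hpq.symm hqm.symm (neg_mem (hr _ _ hd)) _) (C hqm hqm.symm hd _)
    rw [e3]
    refine mul_mem ?_ (inv_mem ?_)
    · rw [hU']
      exact mul_mem (mul_mem (h.t_mem hpm c1) (h.t_mem hqm c2)) (h.t_mem hpm hc)
    · rw [← MulAut.conj_apply]
      conv in (φ (t k m c)) => rw [hU']
      rw [map_mul, map_mul]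
      exact mul_mem (mul_mem (key1 _ c1) (key2 _ c2)) (key1 _ hc)
  · have : cj t k l s (cj t k l r (t l k c)) = cj t k l (s + r) (t l k c) := by
      simp only [cj_apply, h.add k l hkl]; group
    rw [this]; exact z_mem hpq hc _
  · rw [h.cj_z hpq.symm, h.cj_l hpq.symm hqm hpm, conj_mul', e, e, h.cj_row hpm hpq hqm.symm,
      h.cj_r hpq hpm hqm, map_mul]
    exact mul_mem (C hpm hpq.symm (neg_mem (hr _ _ hc)) _) (C hpq hpq.symm hc _)
  · rw [h.cj_z hpq.symm, h.cj_col hpq hpm hqm, e, h.cj_l hpm.symm hqm.symm hpq, map_mul]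
    exact mul_mem (C hqm.symm hpq.symm (hl _ _ hc) _) (C hpq hpq.symm hc _)
  · rw [h.cj_z hpq.symm, h.cj_row hpq.symm hqm hpm, e, h.cj_r hpq hpm hqm, map_mul]
    exact mul_mem (C hpm hpq.symm (neg_mem (hr _ _ hc)) _) (C hpq hpq.symm hc _)
  · rw [h.cj_z hpq.symm, h.cj_r hqm.symm hpm.symm hpq.symm, conj_mul', e, e,
      h.cj_col hqm hpq.symm hpm.symm, h.cj_l hpm.symm hqm.symm hpq, map_mul]
    exact mul_mem (C hqm.symm hpq.symm (hl _ _ hc) _) (C hpq hpq.symm hc _)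

theorem cj_mem (h : Stein t) (hl : ∀ x, ∀ c ∈ K, x * c ∈ K) (hr : ∀ x, ∀ c ∈ K, c * x ∈ K)
    {k l : Fin 3} (hkl : k ≠ l) (s : A) (x : G) (hx : x ∈ M t K) : cj t k l s x ∈ M t K := by
  have : M t K ≤ (M t K).comap (cj t k l s) := by
    refine (Subgroup.closure_le _).2 ?_
    rintro _ ⟨p, q, hpq, c, hc, r, rfl⟩
    exact h.normM hl hr hpq hkl hc r s
  exact this hx

theorem mem_norm (h : Stein t) (hl : ∀ x, ∀ c ∈ K, x * c ∈ K) (hr : ∀ x, ∀ c ∈ K, c * x ∈ K)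
    {k l : Fin 3} (hkl : k ≠ l) (s : A) : t k l s ∈ Subgroup.normalizer (M t K : Set G) := by
  rw [Subgroup.mem_normalizer_iff]
  intro x
  refine ⟨fun hx => h.cj_mem hl hr hkl s x hx, fun hx => ?_⟩
  have := h.cj_mem hl hr hkl (-s) _ hx
  rw [cj_apply, h.neg hkl] at this
  convert this using 1
  group

/-- The computation in the quotient. -/
theorem quot_key (h : Stein t) (I J : AddSubgroup A)
    (hIl : ∀ x, ∀ c ∈ I, x * c ∈ I) (hIr : ∀ x, ∀ c ∈ I, c * x ∈ I)
    (hJl : ∀ x, ∀ c ∈ J, x * c ∈ J)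
    (hIJ : ∀ a ∈ I, ∀ b ∈ J, ∀ p q, p ≠ q → t p q (a * b) = 1)
    (hJI : ∀ a ∈ I, ∀ b ∈ J, ∀ p q, p ≠ q → t p q (b * a) = 1)
    {i j k : Fin 3} (hij : i ≠ j) (hik : i ≠ k) (hjk : j ≠ k)
    {a b : A} (ha : a ∈ I) (hb : b ∈ J) (r : A) :
    ⁅t j i a, t i j r * t j i b * t i j (-r)⁆ = ⁅t i k (r * b), t k i (r * a)⁆ := by
  have n1 : ∀ p q : Fin 3, p ≠ q → ∀ a ∈ I, ∀ b ∈ J, t p q (-(a * b)) = 1 := by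
    intro p q hpq a ha b hb; rw [h.neg hpq, hIJ a ha b hb p q hpq, inv_one]
  have n2 : ∀ p q : Fin 3, p ≠ q → ∀ a ∈ I, ∀ b ∈ J, t p q (-(b * a)) = 1 := by
    intro p q hpq a ha b hb; rw [h.neg hpq, hJI a ha b hb p q hpq, inv_one]
  -- the conjugate as a commutator
  set z := t i j r * t j i b * t i j (-r) with hz
  set U := t i k (r * b) * t j k b with hU
  set V := t k j (-r) * t k i 1 with hV
  set W := t k i (r * a) with hW
  have zc : z = cj t i j r (t j i b) := by rw [hz, cj_apply, h.neg hij]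
  have e1 : t j i b = t j k b * (cj t k i 1 (t j k b))⁻¹ := by
    rw [h.cj_r hjk hij.symm hik.symm, h.neg hij.symm, mul_one]; group
  have zUV : z = U * V * U⁻¹ * V⁻¹ := by
    rw [zc, e1, map_mul, map_inv, cj_apply k i, map_mul, map_mul, map_inv,
      h.cj_l hij hik hjk, h.cj_r hik.symm hjk.symm hij, one_mul]
    rw [hU, hV]; group
  have xU : cj t j i a U = U := by
    rw [hU, map_mul, h.cj_l hij.symm hjk hik, h.cj_row hij.symm hjk hik, hIJ a ha _ (hJl r b hb) _ _ hjk,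
      one_mul]
  have xV : cj t j i a V = W * V := by
    rw [hV, map_mul, h.cj_r hjk.symm hik.symm hij.symm, h.cj_col hij hik hjk, neg_mul, _root_.neg_neg]
    rw [hW]; group
  have Wz : cj t k i (r * a) z = z := by
    have hra := hIl r a ha
    have e : ∀ (p q) (a : A) (x : G), MulAut.conj (t p q a) x = cj t p q a x := fun _ _ _ _ => rfl
    rw [zc, h.cj_z hij, h.cj_r hik.symm hjk.symm hij, conj_mul', e, e, h.cj_col hik hij hjk.symm,
      h.cj_l hjk.symm hik.symm hij.symm, mul_neg, _root_.neg_neg, hIJ _ (hIr r _ hra) _ hb _ _ hik.symm, one_mul]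
  have WU : W * t j k b = t j k b * W := by
    have := h.com j k i hjk hij.symm hik.symm b (r * a)
    rw [hJI _ (hIl r a ha) b hb _ _ hij.symm, one_mul] at this
    rw [hW, this]
  have xz : t j i a * z * (t j i a)⁻¹ = U * (W * V) * U⁻¹ * (W * V)⁻¹ := by
    rw [← cj_apply]
    conv_lhs => rw [zUV]
    rw [map_mul, map_mul, map_mul, map_inv, map_inv, xU, xV]
  rw [cj_apply] at Wz
  rw [← hW] at Wz
  have fin1 : ⁅t j i a, z⁆ = U * W * U⁻¹ * W⁻¹ := by
    rw [commutatorElement_def, xz]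
    have : U * (W * V) * U⁻¹ * (W * V)⁻¹ = U * W * U⁻¹ * W⁻¹ * (W * (U * V * U⁻¹ * V⁻¹) * W⁻¹) := by
      group
    rw [this, ← zUV, Wz]; group
  rw [fin1, commutatorElement_def, hU]
  have : t i k (r * b) * t j k b * W = t i k (r * b) * W * t j k b := by
    rw [mul_assoc, ← WU, mul_assoc]
  rw [this]; group

theorem key (h : Stein t) (I J : AddSubgroup A)
    (hIl : ∀ x, ∀ c ∈ I, x * c ∈ I) (hIr : ∀ x, ∀ c ∈ I, c * x ∈ I)
    (hJl : ∀ x, ∀ c ∈ J, x * c ∈ J) (hJr : ∀ x, ∀ c ∈ J, c * x ∈ J)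
    (EI EJ : Subgroup G) (hEI : ∀ p q, p ≠ q → ∀ a ∈ I, t p q a ∈ EI)
    (hEJ : ∀ p q, p ≠ q → ∀ a ∈ J, t p q a ∈ EJ)
    {i j k : Fin 3} (hij : i ≠ j) (hik : i ≠ k) (hjk : j ≠ k)
    {a b : A} (ha : a ∈ I) (hb : b ∈ J) (r : A) :
    ⁅t j i a, t i j r * t j i b * t i j (-r)⁆ ∈ ⁅EI, EJ⁆ := by
  let K : AddSubgroup A :=
    { carrier := {c | ∀ x y r p q, p ≠ q → cj t q p r (t p q (x * c * y)) ∈ ⁅EI, EJ⁆}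
      zero_mem' := by
        intro x y r p q hpq
        rw [mul_zero, zero_mul, h.zero hpq, map_one]; exact one_mem _
      add_mem' := by
        intro c d hc hd x y r p q hpq
        rw [mul_add, add_mul, h.add p q hpq, map_mul]
        exact mul_mem (hc x y r p q hpq) (hd x y r p q hpq)
      neg_mem' := by
        intro c hc x y r p q hpq
        rw [mul_neg, neg_mul, h.neg hpq, map_inv]
        exact inv_mem (hc x y r p q hpq) }
  have hl : ∀ x, ∀ c ∈ K, x * c ∈ K := by
    intro w c hc x y r p q hpq
    rw [← mul_assoc]; exact hc (x * w) y r p q hpq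
  have hr : ∀ x, ∀ c ∈ K, c * x ∈ K := by
    intro w c hc x y r p q hpq
    have := hc x (w * y) r p q hpq
    rwa [← mul_assoc, mul_assoc x c w] at this
  -- generic membership
  have gen : ∀ (I J : AddSubgroup A) (EI EJ : Subgroup G),
      (∀ x, ∀ c ∈ I, x * c ∈ I) → (∀ x, ∀ c ∈ J, c * x ∈ J) →
      (∀ p q, p ≠ q → ∀ a ∈ I, t p q a ∈ EI) → (∀ p q, p ≠ q → ∀ a ∈ J, t p q a ∈ EJ) →
      ∀ a ∈ I, ∀ b ∈ J, ∀ x y r p q, p ≠ q → cj t q p r (t p q (x * (a * b) * y)) ∈ ⁅EI, EJ⁆ := by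
    intro I J EI EJ hIl hJr hEI hEJ a ha b hb x y r p q hpq
    obtain ⟨m, hpm, hqm, -⟩ := third p q hpq
    have ha' := hIl x a ha
    have hb' := hJr y b hb
    have e1 : t p q (x * (a * b) * y) = ⁅t p m (x * a), t m q (b * y)⁆ := by
      rw [commutatorElement_def, h.com p m q hpm hpq hqm.symm]
      simp only [mul_assoc]; group
    rw [e1, map_commutatorElement]
    refine Subgroup.commutator_mem_commutator ?_ ?_
    · rw [h.cj_l hpq.symm hqm hpm]
      exact mul_mem (hEI _ _ hqm _ (hIl _ _ ha')) (hEI _ _ hpm _ ha')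
    · rw [h.cj_r hqm.symm hpm.symm hpq.symm]
      exact mul_mem (hEJ _ _ hpm.symm _ (neg_mem (hJr _ _ hb'))) (hEJ _ _ hqm.symm _ hb')
  have hIJ : ∀ a ∈ I, ∀ b ∈ J, a * b ∈ K := fun a ha b hb =>
    gen I J EI EJ hIl hJr hEI hEJ a ha b hb
  have hJI : ∀ a ∈ I, ∀ b ∈ J, b * a ∈ K := by
    intro a ha b hb x y r p q hpq
    rw [Subgroup.commutator_comm]
    exact gen J I EJ EI hJl hIr hEJ hEI b hb a ha x y r p q hpq
  have hM : M t K ≤ ⁅EI, EJ⁆ := by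
    refine (Subgroup.closure_le _).2 ?_
    rintro _ ⟨p, q, hpq, c, hc, r, rfl⟩
    have := hc 1 1 r p q hpq
    rwa [one_mul, mul_one] at this
  let N := Subgroup.normalizer (M t K : Set G)
  let P : Subgroup N := (M t K).subgroupOf N
  have hPn : P.Normal := inferInstance
  let t1 : Fin 3 → Fin 3 → A → N := fun p q s =>
    if hpq : p ≠ q then ⟨t p q s, h.mem_norm hl hr hpq s⟩ else 1
  have t1v : ∀ p q s, p ≠ q → (t1 p q s : G) = t p q s := by
    intro p q s hpq; simp only [t1, dif_pos hpq]
  have h1 : Stein t1 := by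
    refine ⟨?_, ?_, ?_, ?_⟩
    · intro p q hpq a b
      apply Subtype.ext
      simp only [Subgroup.coe_mul, t1v _ _ _ hpq]
      exact h.add p q hpq a b
    · intro p q m h1 h2 h3 a b
      apply Subtype.ext
      simp only [Subgroup.coe_mul, t1v _ _ _ h1, t1v _ _ _ h2]
      exact h.row p q m h1 h2 h3 a b
    · intro p q m h1 h2 h3 a b
      apply Subtype.ext
      simp only [Subgroup.coe_mul, t1v _ _ _ h1.symm, t1v _ _ _ h2.symm]
      exact h.col p q m h1 h2 h3 a b
    · intro p q m h1 h2 h3 a b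
      apply Subtype.ext
      simp only [Subgroup.coe_mul, t1v _ _ _ h1, t1v _ _ _ h2, t1v _ _ _ h3]
      exact h.com p q m h1 h2 h3 a b
  let π := QuotientGroup.mk' P
  have h2 : Stein (fun p q s => π (t1 p q s)) := by
    refine ⟨?_, ?_, ?_, ?_⟩
    · intro p q hpq a b
      simp only [← map_mul, h1.add p q hpq a b]
    · intro p q m e1 e2 e3 a b
      simp only [← map_mul, h1.row p q m e1 e2 e3 a b]
    · intro p q m e1 e2 e3 a b
      simp only [← map_mul, h1.col p q m e1 e2 e3 a b]
    · intro p q m e1 e2 e3 a b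
      simp only [← map_mul, h1.com p q m e1 e2 e3 a b]
  have triv : ∀ c ∈ K, ∀ p q, p ≠ q → π (t1 p q c) = 1 := by
    intro c hc p q hpq
    refine (QuotientGroup.eq_one_iff _).2 ?_
    rw [Subgroup.mem_subgroupOf, t1v _ _ _ hpq]
    exact h.t_mem hpq hc
  have res := h2.quot_key I J hIl hIr hJl (fun a ha b hb => triv _ (hIJ a ha b hb))
    (fun a ha b hb => triv _ (hJI a ha b hb)) hij hik hjk ha hb r
  simp only [← map_mul, ← map_commutatorElement] at res
  have res2 := QuotientGroup.eq.1 res.symm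
  rw [Subgroup.mem_subgroupOf] at res2
  simp only [commutatorElement_def, Subgroup.coe_mul, Subgroup.coe_inv, t1v _ _ _ hij,
    t1v _ _ _ hij.symm, t1v _ _ _ hik, t1v _ _ _ hik.symm] at res2
  simp only [← commutatorElement_def] at res2
  have hy : ⁅t i k (r * b), t k i (r * a)⁆ ∈ ⁅EI, EJ⁆ := by
    rw [Subgroup.commutator_comm]
    exact Subgroup.commutator_mem_commutator (hEJ _ _ hik _ (hJl _ _ hb))
      (hEI _ _ hik.symm _ (hIl _ _ ha))
  have := mul_mem hy (hM res2)
  rwa [mul_inv_cancel_left] at this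

end Stein

namespace FormRingData

variable {A : Type*} [Ring A] {n : ℕ}

theorem bar_one' (D : FormRingData A) : D.bar 1 = 1 := by
  have h := D.bar_mul 1 (D.bar 1)
  rw [one_mul, D.bar_bar, one_mul] at h
  exact h.symm

theorem lamb_comm (D : FormRingData A) (a : A) : D.bar D.lam * a = a * D.bar D.lam := by
  have h := congrArg D.bar (D.lam_comm (D.bar a))
  rw [D.bar_mul, D.bar_mul, D.bar_bar] at h
  exact h.symm

theorem bar_lam (D : FormRingData A) : D.bar D.lam * D.lam = 1 := by
  rw [D.lamb_comm, D.lam_bar]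

/-- The power of the symmetry in a short root element. -/
theorem lpow_eps (D : FormRingData A) (i j : Idx n) :
    D.lpow ((Idx.eps j - Idx.eps i) / 2) =
      if i.2 = j.2 then 1 else if j.2 then D.lam else D.bar D.lam := by
  rcases i with ⟨i, _ | _⟩ <;> rcases j with ⟨j, _ | _⟩ <;> simp [lpow, Idx.eps]

theorem lpow_mul (D : FormRingData A) (i j k : Idx n)
    (a b : A) :
    D.lpow ((Idx.eps k - Idx.eps j) / 2) * D.bar b *
      (D.lpow ((Idx.eps j - Idx.eps i) / 2) * D.bar a) =
    D.lpow ((Idx.eps k - Idx.eps i) / 2) * D.bar (a * b) := by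
  have c1 : ∀ x y : A, D.lam * x * (D.bar D.lam * y) = x * y := by
    intro x y
    rw [D.lam_comm, mul_assoc, ← mul_assoc D.lam, D.lam_bar, one_mul]
  have c2 : ∀ x y : A, D.bar D.lam * x * (D.lam * y) = x * y := by
    intro x y
    rw [D.lamb_comm, mul_assoc, ← mul_assoc (D.bar D.lam), D.bar_lam, one_mul]
  have c3 : ∀ x y : A, x * (D.lam * y) = D.lam * (x * y) := by
    intro x y
    rw [← mul_assoc, ← D.lam_comm, mul_assoc]
  have c4 : ∀ x y : A, x * (D.bar D.lam * y) = D.bar D.lam * (x * y) := by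
    intro x y
    rw [← mul_assoc, ← D.lamb_comm, mul_assoc]
  rw [D.bar_mul, lpow_eps, lpow_eps, lpow_eps]
  rcases i with ⟨i, _ | _⟩ <;> rcases j with ⟨j, _ | _⟩ <;> rcases k with ⟨k, _ | _⟩ <;>
    simp [c1, c2, c3, c4, mul_assoc]

theorem Xmat_add (D : FormRingData A) (i j : Idx n) (a b : A) :
    D.Xmat i j (a + b) = D.Xmat i j a + D.Xmat i j b := by
  unfold Xmat
  rw [map_add, mul_add, single_add, single_add]
  abel

theorem Xmat_mul_zero (D : FormRingData A) {i j p q : Idx n} (h1 : j ≠ p) (h2 : i ≠ q)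
    (h3 : j ≠ Idx.neg q) (h4 : Idx.neg i ≠ p) (a b : A) :
    D.Xmat i j a * D.Xmat p q b = 0 := by
  unfold Xmat
  rw [sub_mul, mul_sub, mul_sub,
    single_mul_single_of_ne _ _ _ _ h1, single_mul_single_of_ne _ _ _ _ h3,
    single_mul_single_of_ne _ _ _ _ h4,
    single_mul_single_of_ne _ _ _ _ (fun h => h2 (Idx.neg_injective h))]
  simp

theorem Xmat_com (D : FormRingData A) {i j k : Idx n} (hij : i ≠ j) (hik : i ≠ k) (hjk : j ≠ k)
    (hij' : i ≠ Idx.neg j) (hik' : i ≠ Idx.neg k) (hjk' : j ≠ Idx.neg k) (a b : A) :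
    D.Xmat i j a * D.Xmat j k b =
      D.Xmat i k (a * b) + D.Xmat j k b * D.Xmat i j a := by
  have hki' : k ≠ Idx.neg i := fun h => hik' (by rw [h, Idx.neg_neg])
  have hji' : j ≠ Idx.neg i := fun h => hij' (by rw [h, Idx.neg_neg])
  unfold Xmat
  simp only [sub_mul, mul_sub]
  rw [single_mul_single_same, single_mul_single_of_ne _ _ _ _ hjk',
    single_mul_single_of_ne _ _ _ _ hji'.symm,
    single_mul_single_of_ne _ _ _ _ (fun h => hik (Idx.neg_injective h)),
    single_mul_single_of_ne _ _ _ _ hik.symm,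
    single_mul_single_of_ne _ _ _ _ hij'.symm,
    single_mul_single_of_ne _ _ _ _ (fun h : k = Idx.neg j => hjk' (by rw [h, Idx.neg_neg])),
    single_mul_single_same, D.lpow_mul]
  · simp

theorem TS_val (D : FormRingData A) {i j : Idx n} (h : i ≠ j) (a : A) :
    (D.TS i j a : Matrix (Idx n) (Idx n) A) = 1 + D.Xmat i j a := by
  unfold TS
  rw [dif_neg h]

theorem TS_stein (D : FormRingData A) (f : Fin 3 → Idx n)
    (hf : ∀ p q, p ≠ q → f p ≠ f q) (hf' : ∀ p q, f p ≠ Idx.neg (f q)) :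
    Stein (fun p q a => D.TS (f p) (f q) a) := by
  refine ⟨?_, ?_, ?_, ?_⟩
  · intro p q h a b
    apply Units.ext
    rw [Units.val_mul, D.TS_val (hf p q h), D.TS_val (hf p q h), D.TS_val (hf p q h), D.Xmat_add]
    have := D.Xmat_mul (hf p q h) a b
    simp only [mul_add, add_mul, this, one_mul, mul_one]
    abel
  · intro p q m h1 h2 h3 a b
    apply Units.ext
    rw [Units.val_mul, Units.val_mul, D.TS_val (hf p q h1), D.TS_val (hf p m h2)]
    have e1 := D.Xmat_mul_zero (hf q p h1.symm) (hf p m h2) (hf' q m) (hf' p p).symm a b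
    have e2 := D.Xmat_mul_zero (hf m p h2.symm) (hf p q h1) (hf' m q) (hf' p p).symm b a
    simp only [mul_add, add_mul, e1, e2, one_mul, mul_one]
    abel
  · intro p q m h1 h2 h3 a b
    apply Units.ext
    rw [Units.val_mul, Units.val_mul, D.TS_val (hf q p h1.symm), D.TS_val (hf m p h2.symm)]
    have e1 := D.Xmat_mul_zero (hf p m h2) (hf q p h1.symm) (hf' p p) (hf' m q).symm a b
    have e2 := D.Xmat_mul_zero (hf p q h1) (hf m p h2.symm) (hf' p p) (hf' q m).symm b a
    simp only [mul_add, add_mul, e1, e2, one_mul, mul_one]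
    abel
  · intro p q m h1 h2 h3 a b
    apply Units.ext
    rw [Units.val_mul, Units.val_mul, Units.val_mul, D.TS_val (hf p q h1), D.TS_val (hf q m h3),
      D.TS_val (hf p m h2)]
    have e1 := D.Xmat_com (hf p q h1) (hf p m h2) (hf q m h3) (hf' p q) (hf' p m) (hf' q m) a b
    have e2 := D.Xmat_mul_zero (hf m q h3.symm) (hf p m h2) (hf' m m) (hf' q p).symm (a * b) b
    have e3 := D.Xmat_mul_zero (hf m p h2.symm) (hf p q h1) (hf' m q) (hf' p p).symm (a * b) a
    simp only [mul_add, add_mul, e1, e2, e3, one_mul, mul_one, zero_mul]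
    abel

end FormRingData

/-- Lemma 8: `[T_{ji}(a), Z_{ji}(b,r)] ∈ [FU(2n,I,Γ), FU(2n,J,Δ)]` for short
root positions. -/
theorem statement11 {A : Type*} [Ring A] (D : FormRingData A) (n : ℕ) (hn : 3 ≤ n)
    (FI FJ : FormIdeal D) (i j : Idx n) (hij : i ≠ j) (hij' : i ≠ Idx.neg j)
    (a : A) (ha : a ∈ FI.I) (b : A) (hb : b ∈ FJ.I) (r : A) :
    ⁅D.TS j i a, D.TS i j r * D.TS j i b * D.TS i j (-r)⁆ ∈
      ⁅D.FU n FI.I FI.Gamma, D.FU n FJ.I FJ.Gamma⁆ := by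
  obtain ⟨m, hmi, hmj⟩ : ∃ m : Fin n, m ≠ i.1 ∧ m ≠ j.1 := by
    have : ∃ m : Fin n, m ∉ ({i.1, j.1} : Finset (Fin n)) := by
      by_contra hcon
      push Not at hcon
      have h1 : (Finset.univ : Finset (Fin n)) ⊆ {i.1, j.1} := fun m _ => hcon m
      have h2 := Finset.card_le_card h1
      have h3 : ({i.1, j.1} : Finset (Fin n)).card ≤ 2 := Finset.card_le_two
      rw [Finset.card_univ, Fintype.card_fin] at h2
      omega
    simpa using this
  have hij1 : i.1 ≠ j.1 := by
    intro h
    by_cases h2 : i.2 = j.2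
    · exact hij (Prod.ext h h2)
    · refine hij' (Prod.ext h ?_)
      simp only [Idx.neg]
      cases hi : i.2 <;> cases hj : j.2 <;> simp_all
  let f : Fin 3 → Idx n := ![i, j, (m, true)]
  have hf1 : ∀ p q, p ≠ q → (f p).1 ≠ (f q).1 := by
    intro p q hpq
    fin_cases p <;> fin_cases q <;>
      first
      | exact absurd rfl hpq
      | simpa [f] using hij1
      | simpa [f] using hij1.symm
      | simpa [f] using hmi
      | simpa [f] using hmi.symm
      | simpa [f] using hmj
      | simpa [f] using hmj.symm
  have hf : ∀ p q, p ≠ q → f p ≠ f q := fun p q hpq h => hf1 p q hpq (congrArg Prod.fst h)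
  have hf' : ∀ p q, f p ≠ Idx.neg (f q) := by
    intro p q
    by_cases hpq : p = q
    · subst hpq; exact (Idx.neg_ne _).symm
    · intro h
      exact hf1 p q hpq (by rw [h]; rfl)
  have hS := D.TS_stein f hf hf'
  have hE : ∀ (F : FormIdeal D) (p q : Fin 3), p ≠ q → ∀ a ∈ F.I,
      D.TS (f p) (f q) a ∈ D.FU n F.I F.Gamma := fun F p q hpq a ha =>
    Subgroup.subset_closure (Or.inl ⟨f p, f q, hf p q hpq, hf' p q, a, ha, rfl⟩)
  exact hS.key FI.I FJ.I FI.mul_mem_left FI.mul_mem_right FJ.mul_mem_left FJ.mul_mem_right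
    _ _ (hE FI) (hE FJ) (i := 0) (j := 1) (k := 2) (by decide) (by decide) (by decide) ha hb r
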